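/- Fix an integer K ≥ 2 and reals ε_e > 0, Δ ≥ 0, ε_a with Δ/(1+Δ) < ε_a < 1, and define γ^out, γ^in as in the parameterization below. Then the symmetrized KL divergence between the corresponding Dirichlet densities satisfies ∫_{S_K} f_{γ^out} log(f_{γ^out}/f_{γ^in}) dp + ∫_{S_K} f_{γ^in} log(f_{γ^in}/f_{γ^out}) dp = (Δ(1−ε_a)/ε_e) · ( ψ((1+Δ)(1−ε_a)/ε_e) − ψ((1−ε_a)/ε_e) + ψ(ε_a/((K−1)ε_e)) − ψ((ε_a(1+Δ)−Δ)/((K−1)ε_e)) ). -/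

import Mathlib

open MeasureTheory

/-- The open standard simplex `S_K` in coordinates `(p_0, …, p_{K-2}) ∈ ℝ^{K-1}`:
all coordinates positive and their sum less than 1 (so that `p_{K-1} = 1 - Σ` is positive). -/
def simplexCoords (K : ℕ) : Set (Fin (K - 1) → ℝ) :=
  {x | (∀ i, 0 < x i) ∧ ∑ i, x i < 1}

/-- The full probability vector `p ∈ ℝ^K` obtained from the coordinates
`(p_0, …, p_{K-2})`, with `p_{K-1} = 1 - Σ_{k < K-1} p_k`. -/
noncomputable def fullProb (K : ℕ) (x : Fin (K - 1) → ℝ) : Fin K → ℝ :=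
  fun k => if h : (k : ℕ) < K - 1 then x ⟨k, h⟩ else 1 - ∑ i, x i

/-- Multivariate Beta function `B(γ) = (∏ₖ Γ(γₖ)) / Γ(Σₖ γₖ)`. -/
noncomputable def multiBeta {K : ℕ} (γ : Fin K → ℝ) : ℝ :=
  (∏ i, Real.Gamma (γ i)) / Real.Gamma (∑ i, γ i)

/-- Dirichlet density `f_γ(p) = (1/B(γ)) ∏ₖ pₖ^(γₖ - 1)` in simplex coordinates. -/
noncomputable def dirichletPdf {K : ℕ} (γ : Fin K → ℝ) (x : Fin (K - 1) → ℝ) : ℝ :=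
  (1 / multiBeta γ) * ∏ k, (fullProb K x k) ^ (γ k - 1)

/-- Digamma function `ψ(x) = Γ'(x)/Γ(x)`. -/
noncomputable def digamma (x : ℝ) : ℝ := deriv Real.Gamma x / Real.Gamma x

/-- Dirichlet parameters for the model trained *without* the target point. -/
noncomputable def gammaOut (K : ℕ) (epsE epsA : ℝ) : Fin K → ℝ := fun k =>
  if (k : ℕ) = 0 then (1 - epsA) / epsE else epsA / (((K : ℝ) - 1) * epsE)

/-- Dirichlet parameters for the model trained *with* the target point. -/
noncomputable def gammaIn (K : ℕ) (epsE Δ epsA : ℝ) : Fin K → ℝ := fun k =>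
  if (k : ℕ) = 0 then (1 + Δ) * (1 - epsA) / epsE
  else (epsA * (1 + Δ) - Δ) / (((K : ℝ) - 1) * epsE)

/-- The upper bound on the attacker's advantage under confidence-vector disclosure. -/
noncomputable def AdvCVub (Δ epsA epsE : ℝ) (K : ℕ) : ℝ :=
  Real.sqrt ((Δ * (1 - epsA) / epsE) *
    (digamma ((1 + Δ) * (1 - epsA) / epsE) - digamma ((1 - epsA) / epsE)
      + digamma (epsA / (((K : ℝ) - 1) * epsE))
      - digamma ((epsA * (1 + Δ) - Δ) / (((K : ℝ) - 1) * epsE))))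

/-!
On the simplex `f_γ = exp (∑ k, (γ_k - 1) log p_k - log B(γ))`, so the Dirichlet densities form an
exponential family with sufficient statistics `log p_k` and log-partition function `log B`. The
cumulant generating function of `∑ k, d_k log p_k` under `f_γ` is therefore
`t ↦ log B(γ + t d) - log B(γ)`, and its derivative at `0` gives the expectation
`∑ k, d_k (ψ(γ_k) - ψ(∑ j, γ_j))`. Taking `d = γ - δ` evaluates each Kullback-Leibler integral; in
the symmetrized sum the terms `log B` cancel. The parameters `γ^out` and `γ^in` both sum to
`1 / ε_e`, so the contributions of `ψ(∑ j, γ_j)` cancel too.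

The normalization of `f_γ` is Dirichlet's integral: integrating out one coordinate over its
fiber `(0, 1 - ∑ y_i)` is a scaled Beta integral, which merges the exponent of that coordinate with
the exponent of the slack `1 - ∑ y_i`.
-/

open ProbabilityTheory Set
open scoped ENNReal Topology

theorem setLIntegral_Ioo_rpow_mul_sub_rpow {a b s : ℝ} (ha : 0 < a) (hb : 0 < b) (hs : 0 < s) :
    ∫⁻ y in Ioo 0 s, ENNReal.ofReal (y ^ (a - 1) * (s - y) ^ (b - 1)) =
      ENNReal.ofReal (s ^ (a + b - 1) * beta a b) := by
  have hBeta := beta_pos ha hb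
  have hImage : (fun y ↦ s * y) '' Ioo 0 1 = Ioo 0 s := by
    rw [image_mul_left_Ioo hs, mul_zero, mul_one]
  have hDeriv (y : ℝ) : HasDerivAt (fun y ↦ s * y) s y := by
    simpa using (hasDerivAt_id y).const_mul s
  have hScale : ∀ y ∈ Ioo (0 : ℝ) 1,
      ENNReal.ofReal |s| * ENNReal.ofReal ((s * y) ^ (a - 1) * (s - s * y) ^ (b - 1)) =
        ENNReal.ofReal (s ^ (a + b - 1) * beta a b) *
          ENNReal.ofReal (1 / beta a b * y ^ (a - 1) * (1 - y) ^ (b - 1)) := by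
    intro y hy
    rw [abs_of_pos hs, ← ENNReal.ofReal_mul hs.le, ← ENNReal.ofReal_mul (by positivity),
      ← mul_one_sub, Real.mul_rpow hs.le hy.1.le, Real.mul_rpow hs.le (sub_nonneg.2 hy.2.le),
      show a + b - 1 = 1 + (a - 1) + (b - 1) by ring, Real.rpow_add hs, Real.rpow_add hs,
      Real.rpow_one]
    congr 1
    field_simp
  rw [← hImage, lintegral_image_eq_lintegral_abs_deriv_mul measurableSet_Ioo
      (fun y _ ↦ (hDeriv y).hasDerivWithinAt) (mul_right_injective₀ hs.ne').injOn,
    setLIntegral_congr_fun measurableSet_Ioo hScale,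
    lintegral_const_mul' _ _ ENNReal.ofReal_ne_top, ← lintegral_betaPDF,
    lintegral_betaPDF_eq_one ha hb, mul_one]

/-- The open simplex with vertices `0` and the unit vectors of `ℝⁿ`. It is `simplexCoords (n + 1)`
without the truncated subtraction in the dimension, which would obstruct induction on `n`. -/
def cornerSimplex (n : ℕ) : Set (Fin n → ℝ) :=
  {x | (∀ i, 0 < x i) ∧ ∑ i, x i < 1}

theorem measurableSet_cornerSimplex (n : ℕ) : MeasurableSet (cornerSimplex n) := by
  unfold cornerSimplex
  measurability

theorem cons_mem_cornerSimplex_iff {n : ℕ} {p : ℝ} {y : Fin n → ℝ} :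
    (Fin.cons p y : Fin (n + 1) → ℝ) ∈ cornerSimplex (n + 1) ↔
      y ∈ cornerSimplex n ∧ p ∈ Ioo 0 (1 - ∑ i, y i) := by
  simp only [cornerSimplex, mem_ofPred_eq, Fin.forall_fin_succ, Fin.sum_univ_succ, Fin.cons_zero,
    Fin.cons_succ, mem_Ioo, lt_sub_iff_add_lt]
  constructor
  · rintro ⟨⟨hp, hy⟩, hsum⟩
    exact ⟨⟨hy, by linarith⟩, hp, hsum⟩
  · rintro ⟨⟨hy, -⟩, hp, hsum⟩
    exact ⟨⟨hp, hy⟩, hsum⟩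

theorem setLIntegral_cornerSimplex_succ {n : ℕ} {F : (Fin (n + 1) → ℝ) → ℝ≥0∞}
    (hF : Measurable F) :
    ∫⁻ x in cornerSimplex (n + 1), F x =
      ∫⁻ y in cornerSimplex n, ∫⁻ p in Ioo 0 (1 - ∑ i, y i), F (Fin.cons p y) := by
  let e := (MeasurableEquiv.piFinSuccAbove (fun _ : Fin (n + 1) ↦ ℝ) 0).symm
  have he : MeasurePreserving e := (volume_preserving_piFinSuccAbove _ 0).symm
  have he_apply (z : ℝ × (Fin n → ℝ)) : e z = (Fin.cons z.1 z.2 : Fin (n + 1) → ℝ) := by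
    simp [e, MeasurableEquiv.piFinSuccAbove_symm_apply, Fin.consEquiv]
  have hFS : Measurable ((cornerSimplex (n + 1)).indicator F) :=
    hF.indicator (measurableSet_cornerSimplex _)
  have hFSe : Measurable fun z ↦ (cornerSimplex (n + 1)).indicator F (e z) :=
    hFS.comp he.measurable
  rw [← lintegral_indicator (measurableSet_cornerSimplex _), ← he.lintegral_comp hFS,
    Measure.volume_eq_prod, lintegral_prod_symm' _ hFSe,
    ← lintegral_indicator (measurableSet_cornerSimplex n)]
  refine lintegral_congr fun y ↦ ?_
  simp only [he_apply]
  by_cases hy : y ∈ cornerSimplex n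
  · rw [indicator_of_mem hy, ← lintegral_indicator measurableSet_Ioo]
    refine lintegral_congr fun p ↦ ?_
    simp only [indicator, cons_mem_cornerSimplex_iff, hy, true_and]
  · simp only [indicator, cons_mem_cornerSimplex_iff, hy, false_and, if_false, lintegral_zero]

theorem setLIntegral_Ioo_cons_prod_rpow {n : ℕ} {a : Fin (n + 1) → ℝ} {b : ℝ} (ha : 0 < a 0)
    (hb : 0 < b) {y : Fin n → ℝ} (hy : y ∈ cornerSimplex n) :
    ∫⁻ p in Ioo 0 (1 - ∑ i, y i), ENNReal.ofReal
        ((∏ i, (Fin.cons p y : Fin (n + 1) → ℝ) i ^ (a i - 1)) *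
          (1 - ∑ i, (Fin.cons p y : Fin (n + 1) → ℝ) i) ^ (b - 1)) =
      ENNReal.ofReal (beta (a 0) b) * ENNReal.ofReal
        ((∏ i, y i ^ (a i.succ - 1)) * (1 - ∑ i, y i) ^ (a 0 + b - 1)) := by
  have hProd : 0 ≤ ∏ i : Fin n, y i ^ (a i.succ - 1) :=
    Finset.prod_nonneg fun i _ ↦ Real.rpow_nonneg (hy.1 i).le _
  have hSplit (p : ℝ) :
      (∏ i, (Fin.cons p y : Fin (n + 1) → ℝ) i ^ (a i - 1)) *
          (1 - ∑ i, (Fin.cons p y : Fin (n + 1) → ℝ) i) ^ (b - 1) =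
        (∏ i, y i ^ (a i.succ - 1)) * (p ^ (a 0 - 1) * (1 - ∑ i, y i - p) ^ (b - 1)) := by
    simp only [Fin.prod_univ_succ, Fin.sum_univ_succ, Fin.cons_zero, Fin.cons_succ,
      add_comm p, ← sub_sub]
    ring
  simp only [hSplit, ENNReal.ofReal_mul hProd]
  rw [lintegral_const_mul' _ _ ENNReal.ofReal_ne_top,
    setLIntegral_Ioo_rpow_mul_sub_rpow ha hb (sub_pos.2 hy.2), mul_comm _ (beta _ _),
    ENNReal.ofReal_mul (beta_pos ha hb).le]
  ring

theorem setLIntegral_cornerSimplex_prod_rpow {n : ℕ} {a : Fin n → ℝ} {b : ℝ}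
    (ha : ∀ i, 0 < a i) (hb : 0 < b) :
    ∫⁻ x in cornerSimplex n,
        ENNReal.ofReal ((∏ i, x i ^ (a i - 1)) * (1 - ∑ i, x i) ^ (b - 1)) =
      ENNReal.ofReal ((∏ i, Real.Gamma (a i)) * Real.Gamma b / Real.Gamma (∑ i, a i + b)) := by
  induction n generalizing b with
  | zero =>
    have hS : cornerSimplex 0 = univ := by ext x; simp [cornerSimplex]
    rw [hS, Measure.restrict_univ, lintegral_unique]
    simp [(Real.Gamma_pos_of_pos hb).ne', volume_pi]
  | succ n ih =>
    have hGamma := (Real.Gamma_pos_of_pos (add_pos (ha 0) hb)).ne'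
    rw [setLIntegral_cornerSimplex_succ (by fun_prop),
      setLIntegral_congr_fun (measurableSet_cornerSimplex _)
        fun y hy ↦ setLIntegral_Ioo_cons_prod_rpow (ha 0) hb hy,
      lintegral_const_mul' _ _ ENNReal.ofReal_ne_top,
      ih (fun i ↦ ha i.succ) (add_pos (ha 0) hb),
      ← ENNReal.ofReal_mul (beta_pos (ha 0) hb).le, beta, Fin.prod_univ_succ, Fin.sum_univ_succ,
      add_right_comm _ _ b, add_comm (a 0 + b)]
    congr 1
    field_simp

theorem measurableSet_simplexCoords (K : ℕ) : MeasurableSet (simplexCoords K) :=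
  measurableSet_cornerSimplex (K - 1)

theorem fullProb_pos {K : ℕ} {x : Fin (K - 1) → ℝ} (hx : x ∈ simplexCoords K) (k : Fin K) :
    0 < fullProb K x k := by
  unfold fullProb
  split_ifs
  · exact hx.1 _
  · exact sub_pos.2 hx.2

theorem measurable_fullProb (K : ℕ) (k : Fin K) : Measurable fun x ↦ fullProb K x k := by
  unfold fullProb
  split_ifs <;> fun_prop

theorem multiBeta_pos {n : ℕ} {γ : Fin (n + 1) → ℝ} (hγ : ∀ k, 0 < γ k) : 0 < multiBeta γ :=
  div_pos (Finset.prod_pos fun k _ ↦ Real.Gamma_pos_of_pos (hγ k))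
    (Real.Gamma_pos_of_pos (Finset.sum_pos (fun k _ ↦ hγ k) Finset.univ_nonempty))

theorem setLIntegral_simplexCoords_prod_fullProb_rpow {n : ℕ} {γ : Fin (n + 1) → ℝ}
    (hγ : ∀ k, 0 < γ k) :
    ∫⁻ x in simplexCoords (n + 1), ENNReal.ofReal (∏ k, fullProb (n + 1) x k ^ (γ k - 1)) =
      ENNReal.ofReal (multiBeta γ) := by
  have hDirichlet := setLIntegral_cornerSimplex_prod_rpow
    (fun i : Fin n ↦ hγ i.castSucc) (hγ (Fin.last n))
  rw [multiBeta, Fin.prod_univ_castSucc, Fin.sum_univ_castSucc, ← hDirichlet]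
  simp only [Fin.prod_univ_castSucc, fullProb, Fin.val_castSucc, Fin.val_last,
    Nat.add_one_sub_one, lt_irrefl, Fin.is_lt, dite_true, dite_false, Fin.eta]
  rfl

theorem measurable_dirichletPdf {K : ℕ} (γ : Fin K → ℝ) : Measurable (dirichletPdf γ) :=
  (Finset.measurable_prod _ fun k _ ↦ (measurable_fullProb K k).pow_const _).const_mul _

section DirichletPdf

variable {n : ℕ} {γ : Fin (n + 1) → ℝ}

theorem dirichletPdf_pos (hγ : ∀ k, 0 < γ k) {x : Fin (n + 1 - 1) → ℝ}
    (hx : x ∈ simplexCoords (n + 1)) : 0 < dirichletPdf γ x :=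
  mul_pos (one_div_pos.2 (multiBeta_pos hγ))
    (Finset.prod_pos fun k _ ↦ Real.rpow_pos_of_pos (fullProb_pos hx k) _)

theorem setLIntegral_dirichletPdf (hγ : ∀ k, 0 < γ k) :
    ∫⁻ x in simplexCoords (n + 1), ENNReal.ofReal (dirichletPdf γ x) = 1 := by
  have hB := multiBeta_pos hγ
  simp only [dirichletPdf, ENNReal.ofReal_mul (one_div_pos.2 hB).le]
  rw [lintegral_const_mul' _ _ ENNReal.ofReal_ne_top,
    setLIntegral_simplexCoords_prod_fullProb_rpow hγ, ← ENNReal.ofReal_mul (one_div_pos.2 hB).le,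
    one_div_mul_cancel hB.ne', ENNReal.ofReal_one]

theorem dirichletPdf_ae_nonneg (hγ : ∀ k, 0 < γ k) :
    0 ≤ᵐ[volume.restrict (simplexCoords (n + 1))] dirichletPdf γ :=
  ae_restrict_of_forall_mem (measurableSet_simplexCoords _) fun _ hx ↦ (dirichletPdf_pos hγ hx).le

theorem integrableOn_dirichletPdf (hγ : ∀ k, 0 < γ k) :
    IntegrableOn (dirichletPdf γ) (simplexCoords (n + 1)) := by
  refine ⟨(measurable_dirichletPdf γ).aestronglyMeasurable, ?_⟩
  rw [hasFiniteIntegral_iff_ofReal (dirichletPdf_ae_nonneg hγ), setLIntegral_dirichletPdf hγ]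
  exact ENNReal.one_lt_top

theorem setIntegral_dirichletPdf (hγ : ∀ k, 0 < γ k) :
    ∫ x in simplexCoords (n + 1), dirichletPdf γ x = 1 := by
  rw [integral_eq_lintegral_of_nonneg_ae (dirichletPdf_ae_nonneg hγ)
    (measurable_dirichletPdf γ).aestronglyMeasurable, setLIntegral_dirichletPdf hγ,
    ENNReal.toReal_one]

end DirichletPdf

/-- The Dirichlet distribution with parameter `γ`, as a measure on the coordinates
`(p_0, …, p_{K-2})`; it lets moment generating functions be applied to Dirichlet densities. -/
noncomputable def dirichletMeasure {K : ℕ} (γ : Fin K → ℝ) : Measure (Fin (K - 1) → ℝ) :=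
  (volume.restrict (simplexCoords K)).withDensity fun x ↦ ENNReal.ofReal (dirichletPdf γ x)

section DirichletMeasure

variable {n : ℕ} {γ : Fin (n + 1) → ℝ}

theorem isProbabilityMeasure_dirichletMeasure (hγ : ∀ k, 0 < γ k) :
    IsProbabilityMeasure (dirichletMeasure γ) := by
  refine ⟨?_⟩
  rw [dirichletMeasure, withDensity_apply _ .univ, Measure.restrict_univ,
    setLIntegral_dirichletPdf hγ]

theorem toReal_ofReal_dirichletPdf_smul_ae_eq (hγ : ∀ k, 0 < γ k)
    (f : (Fin (n + 1 - 1) → ℝ) → ℝ) :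
    (fun x ↦ (ENNReal.ofReal (dirichletPdf γ x)).toReal • f x) =ᵐ[
      volume.restrict (simplexCoords (n + 1))] fun x ↦ dirichletPdf γ x * f x := by
  filter_upwards [dirichletPdf_ae_nonneg hγ] with x hx
  rw [ENNReal.toReal_ofReal hx, smul_eq_mul]

theorem integrable_dirichletMeasure_iff (hγ : ∀ k, 0 < γ k) {f : (Fin (n + 1 - 1) → ℝ) → ℝ} :
    Integrable f (dirichletMeasure γ) ↔
      IntegrableOn (fun x ↦ dirichletPdf γ x * f x) (simplexCoords (n + 1)) := by
  rw [dirichletMeasure, integrable_withDensity_iff_integrable_smul'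
    (measurable_dirichletPdf γ).ennreal_ofReal (ae_of_all _ fun _ ↦ ENNReal.ofReal_lt_top)]
  exact integrable_congr (toReal_ofReal_dirichletPdf_smul_ae_eq hγ f)

theorem integral_dirichletMeasure (hγ : ∀ k, 0 < γ k) (f : (Fin (n + 1 - 1) → ℝ) → ℝ) :
    ∫ x, f x ∂dirichletMeasure γ = ∫ x in simplexCoords (n + 1), dirichletPdf γ x * f x := by
  rw [dirichletMeasure, integral_withDensity_eq_integral_toReal_smul
    (measurable_dirichletPdf γ).ennreal_ofReal (ae_of_all _ fun _ ↦ ENNReal.ofReal_lt_top)]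
  exact integral_congr_ae (toReal_ofReal_dirichletPdf_smul_ae_eq hγ f)

end DirichletMeasure

theorem hasDerivAt_log_Gamma {x : ℝ} (hx : 0 < x) :
    HasDerivAt (fun y ↦ Real.log (Real.Gamma y)) (digamma x) x :=
  ((Real.differentiableOn_Gamma_Ioi.differentiableAt (Ioi_mem_nhds hx)).hasDerivAt).log
    (Real.Gamma_pos_of_pos hx).ne'

theorem eventually_forall_pos_add_smul {ι : Type*} [Finite ι] {γ : ι → ℝ} (hγ : ∀ k, 0 < γ k)
    (d : ι → ℝ) : ∀ᶠ t : ℝ in 𝓝 0, ∀ k, 0 < (γ + t • d) k := by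
  refine Filter.eventually_all.2 fun k ↦ ?_
  have hCont : Continuous fun t : ℝ ↦ (γ + t • d) k := by fun_prop
  exact hCont.continuousAt.eventually_const_lt (by simpa using hγ k)

section LogMultiBeta

variable {n : ℕ} {γ : Fin (n + 1) → ℝ}

theorem log_multiBeta (hγ : ∀ k, 0 < γ k) :
    Real.log (multiBeta γ) =
      ∑ k, Real.log (Real.Gamma (γ k)) - Real.log (Real.Gamma (∑ k, γ k)) := by
  have hSum : 0 < ∑ k, γ k := Finset.sum_pos (fun k _ ↦ hγ k) Finset.univ_nonempty
  have hGamma (k) : Real.Gamma (γ k) ≠ 0 := (Real.Gamma_pos_of_pos (hγ k)).ne'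
  rw [multiBeta, Real.log_div (Finset.prod_ne_zero_iff.2 fun k _ ↦ hGamma k)
    (Real.Gamma_pos_of_pos hSum).ne', Real.log_prod fun k _ ↦ hGamma k]

theorem hasDerivAt_log_multiBeta_add_smul (hγ : ∀ k, 0 < γ k) (d : Fin (n + 1) → ℝ) :
    HasDerivAt (fun t : ℝ ↦ Real.log (multiBeta (γ + t • d)))
      (∑ k, digamma (γ k) * d k - digamma (∑ k, γ k) * ∑ k, d k) 0 := by
  have hSum : 0 < ∑ k, γ k := Finset.sum_pos (fun k _ ↦ hγ k) Finset.univ_nonempty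
  have hLine (a c : ℝ) : HasDerivAt (fun t ↦ a + t * c) c 0 := by
    simpa using ((hasDerivAt_id (0 : ℝ)).mul_const c).const_add a
  have hLogGamma {a : ℝ} (ha : 0 < a) (c : ℝ) :
      HasDerivAt (fun t ↦ Real.log (Real.Gamma (a + t * c))) (digamma a * c) 0 :=
    HasDerivAt.comp_of_eq 0 (hasDerivAt_log_Gamma ha) (hLine a c) (by simp)
  refine ((HasDerivAt.fun_sum fun k _ ↦ hLogGamma (hγ k) (d k)).sub
    (hLogGamma hSum (∑ k, d k))).congr_of_eventuallyEq ?_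
  filter_upwards [eventually_forall_pos_add_smul hγ d] with t ht
  simp only [log_multiBeta ht, Pi.add_apply, Pi.smul_apply, smul_eq_mul, Finset.sum_add_distrib,
    Finset.mul_sum, Pi.sub_apply]

end LogMultiBeta

/-- The linear form `∑ k, d k * log (p_k)` in the log-probabilities. For `d = γ - δ` it is, up to
an additive constant, the log-likelihood ratio of the Dirichlet densities `f_γ` and `f_δ`. -/
noncomputable def logProbForm {K : ℕ} (d : Fin K → ℝ) (x : Fin (K - 1) → ℝ) : ℝ :=
  ∑ k, d k * Real.log (fullProb K x k)

theorem prod_fullProb_rpow {K : ℕ} (η : Fin K → ℝ) {x : Fin (K - 1) → ℝ}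
    (hx : x ∈ simplexCoords K) :
    ∏ k, fullProb K x k ^ η k = Real.exp (logProbForm η x) := by
  rw [logProbForm, Real.exp_sum]
  refine Finset.prod_congr rfl fun k _ ↦ ?_
  rw [Real.rpow_def_of_pos (fullProb_pos hx k), mul_comm]

theorem logProbForm_add {K : ℕ} (d e : Fin K → ℝ) (x : Fin (K - 1) → ℝ) :
    logProbForm (d + e) x = logProbForm d x + logProbForm e x := by
  simp only [logProbForm, Pi.add_apply, add_mul, Finset.sum_add_distrib]

theorem logProbForm_smul {K : ℕ} (t : ℝ) (d : Fin K → ℝ) (x : Fin (K - 1) → ℝ) :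
    logProbForm (t • d) x = t * logProbForm d x := by
  simp only [logProbForm, Pi.smul_apply, smul_eq_mul, mul_assoc, Finset.mul_sum]

section LogProbForm

variable {n : ℕ} {γ δ : Fin (n + 1) → ℝ}

theorem dirichletPdf_eq_exp (hγ : ∀ k, 0 < γ k) {x : Fin (n + 1 - 1) → ℝ}
    (hx : x ∈ simplexCoords (n + 1)) :
    dirichletPdf γ x = Real.exp (logProbForm (γ - 1) x - Real.log (multiBeta γ)) := by
  rw [dirichletPdf, Real.exp_sub, Real.exp_log (multiBeta_pos hγ), ← prod_fullProb_rpow _ hx,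
    one_div_mul_eq_div]
  rfl

theorem dirichletPdf_mul_exp_logProbForm (hγ : ∀ k, 0 < γ k) {d : Fin (n + 1) → ℝ} {t : ℝ}
    (ht : ∀ k, 0 < (γ + t • d) k) {x : Fin (n + 1 - 1) → ℝ} (hx : x ∈ simplexCoords (n + 1)) :
    dirichletPdf γ x * Real.exp (t * logProbForm d x) =
      Real.exp (Real.log (multiBeta (γ + t • d)) - Real.log (multiBeta γ)) *
        dirichletPdf (γ + t • d) x := by
  rw [dirichletPdf_eq_exp hγ hx, dirichletPdf_eq_exp ht hx, add_sub_right_comm, logProbForm_add,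
    logProbForm_smul, ← Real.exp_add, ← Real.exp_add]
  congr 1
  ring

theorem integrable_exp_mul_logProbForm (hγ : ∀ k, 0 < γ k) {d : Fin (n + 1) → ℝ} {t : ℝ}
    (ht : ∀ k, 0 < (γ + t • d) k) :
    Integrable (fun x ↦ Real.exp (t * logProbForm d x)) (dirichletMeasure γ) := by
  rw [integrable_dirichletMeasure_iff hγ, integrableOn_congr_fun
    (fun x hx ↦ dirichletPdf_mul_exp_logProbForm hγ ht hx) (measurableSet_simplexCoords _)]
  exact (integrableOn_dirichletPdf ht).const_mul _

theorem cgf_logProbForm (hγ : ∀ k, 0 < γ k) {d : Fin (n + 1) → ℝ} {t : ℝ}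
    (ht : ∀ k, 0 < (γ + t • d) k) :
    cgf (logProbForm d) (dirichletMeasure γ) t =
      Real.log (multiBeta (γ + t • d)) - Real.log (multiBeta γ) := by
  rw [cgf, mgf, integral_dirichletMeasure hγ, setIntegral_congr_fun (measurableSet_simplexCoords _)
    fun x hx ↦ dirichletPdf_mul_exp_logProbForm hγ ht hx, integral_const_mul,
    setIntegral_dirichletPdf ht, mul_one, Real.log_exp]

theorem zero_mem_interior_integrableExpSet_logProbForm (hγ : ∀ k, 0 < γ k)
    (d : Fin (n + 1) → ℝ) :
    0 ∈ interior (integrableExpSet (logProbForm d) (dirichletMeasure γ)) := by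
  rw [mem_interior_iff_mem_nhds]
  filter_upwards [eventually_forall_pos_add_smul hγ d] with t ht
  exact integrable_exp_mul_logProbForm hγ ht

theorem integrable_logProbForm (hγ : ∀ k, 0 < γ k) (d : Fin (n + 1) → ℝ) :
    Integrable (logProbForm d) (dirichletMeasure γ) :=
  integrable_of_mem_interior_integrableExpSet (zero_mem_interior_integrableExpSet_logProbForm hγ d)

theorem integral_logProbForm (hγ : ∀ k, 0 < γ k) (d : Fin (n + 1) → ℝ) :
    ∫ x, logProbForm d x ∂dirichletMeasure γ =
      ∑ k, digamma (γ k) * d k - digamma (∑ k, γ k) * ∑ k, d k := by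
  have := isProbabilityMeasure_dirichletMeasure hγ
  have hCgf : cgf (logProbForm d) (dirichletMeasure γ) =ᶠ[𝓝 0]
      fun t ↦ Real.log (multiBeta (γ + t • d)) - Real.log (multiBeta γ) := by
    filter_upwards [eventually_forall_pos_add_smul hγ d] with t ht
    exact cgf_logProbForm hγ ht
  have hDeriv := deriv_cgf_zero (zero_mem_interior_integrableExpSet_logProbForm hγ d)
  rw [probReal_univ, div_one] at hDeriv
  rw [← hDeriv, hCgf.deriv_eq,
    ((hasDerivAt_log_multiBeta_add_smul hγ d).sub_const (Real.log (multiBeta γ))).deriv]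

theorem log_dirichletPdf_div (hγ : ∀ k, 0 < γ k) (hδ : ∀ k, 0 < δ k)
    {x : Fin (n + 1 - 1) → ℝ} (hx : x ∈ simplexCoords (n + 1)) :
    Real.log (dirichletPdf γ x / dirichletPdf δ x) =
      logProbForm (γ - δ) x + (Real.log (multiBeta δ) - Real.log (multiBeta γ)) := by
  rw [dirichletPdf_eq_exp hγ hx, dirichletPdf_eq_exp hδ hx, ← Real.exp_sub, Real.log_exp,
    show γ - 1 = γ - δ + (δ - 1) by abel, logProbForm_add]
  ring

theorem setIntegral_dirichletPdf_mul_log_div (hγ : ∀ k, 0 < γ k) (hδ : ∀ k, 0 < δ k) :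
    ∫ x in simplexCoords (n + 1),
        dirichletPdf γ x * Real.log (dirichletPdf γ x / dirichletPdf δ x) =
      ∑ k, digamma (γ k) * (γ k - δ k) - digamma (∑ k, γ k) * (∑ k, γ k - ∑ k, δ k) +
        (Real.log (multiBeta δ) - Real.log (multiBeta γ)) := by
  have := isProbabilityMeasure_dirichletMeasure hγ
  calc
    _ = ∫ x in simplexCoords (n + 1), dirichletPdf γ x *
          (logProbForm (γ - δ) x + (Real.log (multiBeta δ) - Real.log (multiBeta γ))) :=
      setIntegral_congr_fun (measurableSet_simplexCoords _) fun x hx ↦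
        congrArg (dirichletPdf γ x * ·) (log_dirichletPdf_div hγ hδ hx)
    _ = ∫ x, (logProbForm (γ - δ) x + (Real.log (multiBeta δ) - Real.log (multiBeta γ)))
          ∂dirichletMeasure γ := (integral_dirichletMeasure hγ _).symm
    _ = _ := by
      rw [integral_add (integrable_logProbForm hγ _) (integrable_const _), integral_const,
        probReal_univ, one_smul, integral_logProbForm hγ]
      simp only [Pi.sub_apply, Finset.sum_sub_distrib]

theorem setIntegral_dirichletPdf_mul_log_div_add_swap (hγ : ∀ k, 0 < γ k) (hδ : ∀ k, 0 < δ k) :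
    (∫ x in simplexCoords (n + 1),
        dirichletPdf γ x * Real.log (dirichletPdf γ x / dirichletPdf δ x)) +
      (∫ x in simplexCoords (n + 1),
        dirichletPdf δ x * Real.log (dirichletPdf δ x / dirichletPdf γ x)) =
      ∑ k, (γ k - δ k) * (digamma (γ k) - digamma (δ k)) -
        (∑ k, γ k - ∑ k, δ k) * (digamma (∑ k, γ k) - digamma (∑ k, δ k)) := by
  rw [setIntegral_dirichletPdf_mul_log_div hγ hδ, setIntegral_dirichletPdf_mul_log_div hδ hγ]
  have hTerm (k) : (γ k - δ k) * (digamma (γ k) - digamma (δ k)) =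
      digamma (γ k) * (γ k - δ k) + digamma (δ k) * (δ k - γ k) := by ring
  simp only [hTerm, Finset.sum_add_distrib]
  ring

end LogProbForm

section Parameters

variable {K : ℕ} {epsE Δ epsA : ℝ}

theorem sum_fin_ite_val_eq_zero (hK : 1 ≤ K) (a b : ℝ) :
    ∑ k : Fin K, (if (k : ℕ) = 0 then a else b) = a + ((K : ℝ) - 1) * b := by
  obtain ⟨n, rfl⟩ := Nat.exists_eq_add_of_le' hK
  simp [Fin.sum_univ_succ]

theorem natCast_sub_one_pos (hK : 2 ≤ K) : (0 : ℝ) < (K : ℝ) - 1 :=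
  sub_pos.2 (Nat.one_lt_cast.2 hK)

theorem gammaOut_pos (hK : 2 ≤ K) (hεe : 0 < epsE) (hεa₀ : 0 < epsA) (hεa₁ : epsA < 1)
    (k : Fin K) : 0 < gammaOut K epsE epsA k := by
  have hK_sub_one := natCast_sub_one_pos hK
  have := sub_pos.2 hεa₁
  unfold gammaOut
  split_ifs <;> positivity

theorem gammaIn_pos (hK : 2 ≤ K) (hεe : 0 < epsE) (hΔ : -1 < Δ) (hεa₁ : Δ / (1 + Δ) < epsA)
    (hεa₂ : epsA < 1) (k : Fin K) : 0 < gammaIn K epsE Δ epsA k := by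
  have hK_sub_one := natCast_sub_one_pos hK
  have hOne_add : 0 < 1 + Δ := by linarith
  have := sub_pos.2 hεa₂
  have hIn_succ : 0 < epsA * (1 + Δ) - Δ := sub_pos.2 ((div_lt_iff₀ hOne_add).1 hεa₁)
  unfold gammaIn
  split_ifs <;> positivity

theorem sum_gammaOut (hK : 2 ≤ K) : ∑ k, gammaOut K epsE epsA k = 1 / epsE := by
  have hK_sub_one := (natCast_sub_one_pos hK).ne'
  simp only [gammaOut]
  rw [sum_fin_ite_val_eq_zero (by lia)]
  field_simp
  ring

theorem sum_gammaIn (hK : 2 ≤ K) : ∑ k, gammaIn K epsE Δ epsA k = 1 / epsE := by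
  have hK_sub_one := (natCast_sub_one_pos hK).ne'
  simp only [gammaIn]
  rw [sum_fin_ite_val_eq_zero (by lia)]
  field_simp
  ring

theorem sum_gammaOut_sub_gammaIn_mul (hK : 2 ≤ K) (ψ : ℝ → ℝ) :
    ∑ k, (gammaOut K epsE epsA k - gammaIn K epsE Δ epsA k) *
        (ψ (gammaOut K epsE epsA k) - ψ (gammaIn K epsE Δ epsA k)) =
      (Δ * (1 - epsA) / epsE) *
        (ψ ((1 + Δ) * (1 - epsA) / epsE) - ψ ((1 - epsA) / epsE)
          + ψ (epsA / (((K : ℝ) - 1) * epsE))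
          - ψ ((epsA * (1 + Δ) - Δ) / (((K : ℝ) - 1) * epsE))) := by
  have hK_sub_one := (natCast_sub_one_pos hK).ne'
  have hTerm (k : Fin K) :
      (gammaOut K epsE epsA k - gammaIn K epsE Δ epsA k) *
          (ψ (gammaOut K epsE epsA k) - ψ (gammaIn K epsE Δ epsA k)) =
        if (k : ℕ) = 0 then
          Δ * (1 - epsA) / epsE * (ψ ((1 + Δ) * (1 - epsA) / epsE) - ψ ((1 - epsA) / epsE))
        else
          Δ * (1 - epsA) / (((K : ℝ) - 1) * epsE) * (ψ (epsA / (((K : ℝ) - 1) * epsE))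
            - ψ ((epsA * (1 + Δ) - Δ) / (((K : ℝ) - 1) * epsE))) := by
    unfold gammaOut gammaIn
    split_ifs <;> ring
  simp only [hTerm]
  rw [sum_fin_ite_val_eq_zero (by lia)]
  field_simp
  ring

end Parameters

theorem stmt8_general (K : ℕ) (hK : 2 ≤ K) (epsE Δ epsA : ℝ) (hεe : 0 < epsE) (hΔ : -1 < Δ)
    (hεa₀ : 0 < epsA) (hεa₁ : Δ / (1 + Δ) < epsA) (hεa₂ : epsA < 1) :
    (∫ x in simplexCoords K,
        dirichletPdf (gammaOut K epsE epsA) x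
          * Real.log (dirichletPdf (gammaOut K epsE epsA) x
              / dirichletPdf (gammaIn K epsE Δ epsA) x))
      + (∫ x in simplexCoords K,
          dirichletPdf (gammaIn K epsE Δ epsA) x
            * Real.log (dirichletPdf (gammaIn K epsE Δ epsA) x
                / dirichletPdf (gammaOut K epsE epsA) x))
      = (Δ * (1 - epsA) / epsE) *
          (digamma ((1 + Δ) * (1 - epsA) / epsE) - digamma ((1 - epsA) / epsE)
            + digamma (epsA / (((K : ℝ) - 1) * epsE))
            - digamma ((epsA * (1 + Δ) - Δ) / (((K : ℝ) - 1) * epsE))) := by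
  obtain ⟨n, rfl⟩ := Nat.exists_eq_add_of_le' (one_le_two.trans hK)
  have hOut := gammaOut_pos hK hεe hεa₀ hεa₂
  have hIn := gammaIn_pos hK hεe hΔ hεa₁ hεa₂
  rw [setIntegral_dirichletPdf_mul_log_div_add_swap hOut hIn, sum_gammaOut hK, sum_gammaIn hK,
    sum_gammaOut_sub_gammaIn_mul hK digamma, sub_self, zero_mul, sub_zero]

/-- Closed form of the symmetrized KL divergence between the two Dirichlet densities. -/
theorem stmt8 (K : ℕ) (hK : 2 ≤ K) (epsE Δ epsA : ℝ)
    (hεe : 0 < epsE) (hΔ : 0 ≤ Δ) (hεa₁ : Δ / (1 + Δ) < epsA) (hεa₂ : epsA < 1) :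
    (∫ x in simplexCoords K,
        dirichletPdf (gammaOut K epsE epsA) x
          * Real.log (dirichletPdf (gammaOut K epsE epsA) x
              / dirichletPdf (gammaIn K epsE Δ epsA) x))
      + (∫ x in simplexCoords K,
          dirichletPdf (gammaIn K epsE Δ epsA) x
            * Real.log (dirichletPdf (gammaIn K epsE Δ epsA) x
                / dirichletPdf (gammaOut K epsE epsA) x))
      = (Δ * (1 - epsA) / epsE) *
          (digamma ((1 + Δ) * (1 - epsA) / epsE) - digamma ((1 - epsA) / epsE)
            + digamma (epsA / (((K : ℝ) - 1) * epsE))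
            - digamma ((epsA * (1 + Δ) - Δ) / (((K : ℝ) - 1) * epsE))) := by
  exact stmt8_general K hK epsE Δ epsA hεe (by linarith)
    (lt_of_le_of_lt (by positivity) hεa₁) hεa₁ hεa₂
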